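/- The graded Lie algebra g = g_{−n−1} ⊕ ... ⊕ g₁ associated with (n+1)-st order ODE systems (n ≥ 2, m ≥ 1, (n,m) ≠ (2,1)) is the full Tanaka prolongation of its non-positive part; equivalently, the first Lie algebra cohomology H¹(g_−, g) (with coefficients in the adjoint action of g_− ⊆ g on g) is concentrated in non-positive homogeneity degrees. Concretely: if (A, φ) ∈ g × C¹(a,g) represents a cocycle in C¹(g_−,g) of positive homogeneity (i.e., ∂_a φ = 0 and ∂_a A = X·φ in the notation of the vector description of ∂_{g_−}), then it is a coboundary: (A,φ) = ∂_{g_−}(−λY) for some λ ∈ ℝ. -/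

import Mathlib

/-!
Write `φ = ψ + τ` with `ψ : a → q` and `τ : a → a`.

The equation `∂_a φ = 0` says `ψ(u)·v = ψ(v)·u`, so `ψ` lies in the first prolongation of
`q ⊆ gl(a)`. Since `a` is an ideal, the bracket `[v, A]` has no `q`-component, and the second
cocycle equation forces `ψ` to commute with `X`. Hence `ψ` is determined by its values on the
top row `v^n ⊗ ℝ^m`, and comparing a few coefficients of the symmetry relation for the highest
rows, where homogeneity excludes an `X`-component in the top row, shows that `ψ = 0`
(`prolongation_trivial`). The exception `(n, m) = (2, 1)`, where
`q ⊆ gl(a)` is the conformal algebra of a quadratic form in dimension three, is the only case in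
which these comparisons leave a solution.

What remains is `[X, τ] = -A` in `gl(a)`. Positivity of the degree implies that `τ` has no
component in `ker X = v^0 ⊗ ℝ^m`, so the equation determines `τ` from `A` by a recursion with closed
form solution (`recursion_solution`). Vanishing of the entries of `τ` beyond the last row kills the
`gl_m`- and the `Y`-component of `A`, leaving `A = α H` and `τ = -α Y` (`highest_weight`), which
is the coboundary with `λ = -α`.
-/

noncomputable section

open scoped BigOperators

/-- Coefficients `(α, β, γ)` representing `α·X + β·H + γ·Y ∈ sl(2,ℝ)`
in the standard basis `X = x∂_y`, `H = x∂_x - y∂_y`, `Y = y∂_x`. -/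
abbrev Sl2 : Type := ℝ × ℝ × ℝ

/-- `gl(m,ℝ)` -/
abbrev Gl (m : ℕ) : Type := Matrix (Fin m) (Fin m) ℝ

/-- `a = V_n ⊗ ℝ^m` where `V_n = S^n(ℝ²)`, in the basis `v^i ⊗ e_b`,
`v^i = (1/i!) x^{n-i} y^i`. -/
abbrev Avec (n m : ℕ) : Type := Matrix (Fin (n+1)) (Fin m) ℝ

/-- `q = sl₂ × gl_m` -/
abbrev Qlie (m : ℕ) : Type := Sl2 × Gl m

/-- `g = q ⋉ a` as a vector space -/
abbrev Glie (n m : ℕ) : Type := Qlie m × Avec n m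

/-- The Lie bracket on `sl₂` in the basis `X, H, Y`:
`[H,X] = 2X`, `[H,Y] = -2Y`, `[X,Y] = H`. -/
def sl2Bracket (p q : Sl2) : Sl2 :=
  (2*(p.2.1*q.1 - q.2.1*p.1), p.1*q.2.2 - q.1*p.2.2, 2*(q.2.1*p.2.2 - p.2.1*q.2.2))

/-- The matrix of `α·X + β·H + γ·Y` acting on `V_n` in the basis
`v^i = (1/i!)x^{n-i}y^i`, so `X v^i = v^{i-1}`, `H v^i = (n-2i)v^i`,
`Y v^i = (n-i)(i+1) v^{i+1}`. -/
def sl2Mat (n : ℕ) (p : Sl2) : Matrix (Fin (n+1)) (Fin (n+1)) ℝ :=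
  fun i j =>
    p.1 * (if (j:ℕ) = (i:ℕ)+1 then 1 else 0)
    + p.2.1 * (if j = i then (n:ℝ) - 2*(i:ℕ) else 0)
    + p.2.2 * (if (j:ℕ)+1 = (i:ℕ) then ((n:ℝ) - (i:ℕ) + 1) * (i:ℕ) else 0)

/-- The action of `q = sl₂ ⊕ gl_m` on `a = V_n ⊗ ℝ^m` (tensor product of the
natural actions). -/
def qAct (n m : ℕ) (q : Qlie m) (u : Avec n m) : Avec n m :=
  sl2Mat n q.1 * u + u * q.2.transpose

/-- The semidirect product bracket on `g = q ⋉ a`: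
`[A ⊕ u, B ⊕ v] = [A,B] ⊕ (A·v − B·u)`. -/
def gBracket {n m : ℕ} (x y : Glie n m) : Glie n m :=
  ((sl2Bracket x.1.1 y.1.1, x.1.2 * y.1.2 - y.1.2 * x.1.2),
   qAct n m x.1 y.2 - qAct n m y.1 x.2)

/-- `X` as an element of `g`. -/
def Xg (n m : ℕ) : Glie n m := (((1,0,0), 0), 0)

/-- `Y` as an element of `g`. -/
def Yg (n m : ℕ) : Glie n m := (((0,0,1), 0), 0)

/-- The inclusion `a → g`. -/
def embA {n m : ℕ} (u : Avec n m) : Glie n m := (0, u)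

/-- The grading element `Z = −H/2 − (1 + n/2)·id_m ∈ q ⊆ g`. -/
def zElt (n m : ℕ) : Glie n m := (((0, -(1:ℝ)/2, 0), (-(1 + (n:ℝ)/2)) • (1 : Gl m)), 0)

/-- The eigenspace of `ad_Z` with eigenvalue `i`. -/
def Egrade (n m : ℕ) (i : ℤ) : Set (Glie n m) :=
  {x | gBracket (zElt n m) x = (i : ℝ) • x}

/-! ### Coordinates -/

/-- The basis vector `v^i ⊗ e_b` of `a`. -/
abbrev basisA {n m : ℕ} (i : Fin (n+1)) (b : Fin m) : Avec n m := Matrix.single i b 1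

lemma sl2Mat_mul_basisA {n m : ℕ} (p : Sl2) (k : Fin (n+1)) (c : Fin m) (j : Fin (n+1))
    (d : Fin m) :
    (sl2Mat n p * basisA k c) j d = if c = d then sl2Mat n p j k else 0 := by
  simp only [Matrix.mul_apply, Matrix.single_apply]
  by_cases h : c = d <;> simp [h]

lemma qAct_basisA {n m : ℕ} (q : Qlie m) (k : Fin (n+1)) (c : Fin m) (j : Fin (n+1))
    (d : Fin m) :
    qAct n m q (basisA k c) j d =
      (if c = d then sl2Mat n q.1 j k else 0) + (if j = k then q.2 d c else 0) := by
  rw [qAct, Matrix.add_apply, sl2Mat_mul_basisA]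
  congr 1
  simp only [Matrix.mul_apply, Matrix.single_apply, Matrix.transpose_apply]
  by_cases h : j = k
  · simp [h]
  · simp [h, Ne.symm h]

lemma sl2Mat_zero (n : ℕ) : sl2Mat n 0 = 0 := by
  ext i j; simp [sl2Mat]

lemma qAct_zero_left {n m : ℕ} (u : Avec n m) : qAct n m 0 u = 0 := by
  simp [qAct, sl2Mat_zero]

lemma qAct_zero_right {n m : ℕ} (q : Qlie m) : qAct n m q 0 = 0 := by
  simp [qAct]

/-- The action of `X` lowers the index of a basis vector by one. -/
lemma X_mul_basisA_succ {n m : ℕ} {i i' : Fin (n+1)} (h : (i:ℕ) = i' + 1) (b : Fin m) :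
    sl2Mat n (1,0,0) * basisA i b = basisA i' b := by
  ext j d
  rw [sl2Mat_mul_basisA]
  simp only [sl2Mat, Matrix.single_apply]
  by_cases hb : b = d <;> by_cases hj : i' = j
  · subst hj; simp [hb, h]
  · have : ¬ ((i':ℕ) = j) := fun h' => hj (Fin.ext h')
    simp [hb, hj, h, this]
  · simp [hb]
  · simp [hb]

lemma X_mul_basisA_zero {n m : ℕ} {i : Fin (n+1)} (h : (i:ℕ) = 0) (b : Fin m) :
    sl2Mat n (1,0,0) * basisA i b = (0 : Avec n m) := by
  ext j d
  rw [sl2Mat_mul_basisA]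
  simp [sl2Mat, h]

/-- Left multiplication by `X` shifts the rows up. -/
lemma X_mul_apply_succ {n m : ℕ} (u : Avec n m) {j j' : Fin (n+1)} (h : (j':ℕ) = j + 1)
    (c : Fin m) : (sl2Mat n (1,0,0) * u) j c = u j' c := by
  rw [Matrix.mul_apply, Finset.sum_eq_single j']
  · simp [sl2Mat, h]
  · intro k _ hk
    have : ¬ ((k:ℕ) = j + 1) := fun h' => hk (Fin.ext (h'.trans h.symm))
    simp [sl2Mat, this]
  · simp

lemma X_mul_apply_last {n m : ℕ} (u : Avec n m) {j : Fin (n+1)} (h : (j:ℕ) = n)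
    (c : Fin m) : (sl2Mat n (1,0,0) * u) j c = 0 := by
  rw [Matrix.mul_apply]
  apply Finset.sum_eq_zero
  intro k _
  have : ¬ ((k:ℕ) = j + 1) := by have := k.2; omega
  simp [sl2Mat, this]

/-! ### Consequences of homogeneity -/

lemma Egrade_X {n m : ℕ} {k : ℤ} {x : Glie n m} (h : x ∈ Egrade n m k) (hk : k ≠ -1) :
    x.1.1.1 = 0 := by
  have h1 : (gBracket (zElt n m) x).1.1.1 = ((k : ℝ) • x).1.1.1 := by rw [h]
  simp [gBracket, zElt, sl2Bracket] at h1
  have h2 : ((k : ℝ) + 1) * x.1.1.1 = 0 := by linarith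
  rcases mul_eq_zero.1 h2 with h3 | h3
  · exact absurd (by exact_mod_cast eq_neg_of_add_eq_zero_left h3) hk
  · exact h3

/-- The row `v^j ⊗ ℝ^m` sits in degree `j - n - 1`. -/
lemma Egrade_a {n m : ℕ} {k : ℤ} {x : Glie n m} (h : x ∈ Egrade n m k) (j : Fin (n+1))
    (c : Fin m) (hk : k ≠ (j:ℤ) - n - 1) : x.2 j c = 0 := by
  have h1 : (gBracket (zElt n m) x).2 j c = ((k : ℝ) • x).2 j c := by rw [h]
  have hd : sl2Mat n (0, -(1:ℝ)/2, 0) =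
      Matrix.diagonal fun i : Fin (n+1) => -(1:ℝ)/2 * (n - 2 * (i:ℕ)) := by
    ext a b
    by_cases hab : a = b
    · subst hab; simp [sl2Mat]
    · simp [sl2Mat, hab, Ne.symm hab]
  simp only [gBracket, zElt, qAct, hd, Matrix.mul_zero, Matrix.zero_mul, add_zero, sub_zero, Matrix.add_apply,
    Matrix.diagonal_mul, Matrix.transpose_smul, Matrix.transpose_one, Matrix.mul_smul,
    Matrix.mul_one, Matrix.smul_apply, Prod.smul_snd, smul_eq_mul] at h1
  have h2 : ((k : ℝ) - ((j:ℕ) - n - 1)) * x.2 j c = 0 := by linarith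
  rcases mul_eq_zero.1 h2 with h3 | h3
  · exact absurd (by exact_mod_cast sub_eq_zero.1 h3) hk
  · exact h3

/-! ### Triviality of the first prolongation -/

/-- Unless `(n, m) = (2, 1)`, the first prolongation of `q ⊆ gl(a)` contains no nonzero map that
commutes with the action of `X` and takes values in `⟨H, Y⟩ ⊕ gl_m` on `v^n ⊗ ℝ^m`. A map is
given by its values `ψ i b` on the basis vectors `v^i ⊗ e_b`. -/
lemma prolongation_trivial {n m : ℕ} (hn : 2 ≤ n) (hex : ¬(n = 2 ∧ m = 1))
    (ψ : Fin (n+1) → Fin m → Qlie m)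
    (hsym : ∀ i b k c, qAct n m (ψ i b) (basisA k c) = qAct n m (ψ k c) (basisA i b))
    (hX : ∀ (i i' : Fin (n+1)) (b : Fin m), (i:ℕ) = i' + 1 →
      ψ i' b = ((-2 * (ψ i b).1.2.1, (ψ i b).1.2.2, 0), 0))
    (htop : ∀ b, (ψ (Fin.last n) b).1.1 = 0) (i : Fin (n+1)) (b : Fin m) : ψ i b = 0 := by
  obtain ⟨r, rfl⟩ : ∃ r, n = r + 2 := ⟨n - 2, by omega⟩
  have key : ∀ i b k c j d, qAct (r+2) m (ψ i b) (basisA k c) j d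
      = qAct (r+2) m (ψ k c) (basisA i b) j d := fun i b k c j d => by rw [hsym]
  simp only [qAct_basisA] at key
  -- the three highest rows
  let p0 : Fin (r+2+1) := Fin.last (r+2)
  let p1 : Fin (r+2+1) := ⟨r+1, by omega⟩
  let p2 : Fin (r+2+1) := ⟨r, by omega⟩
  have hlow : ∀ (i : Fin (r+2+1)) b, i ≠ p0 →
      ∃ i' : Fin (r+2+1), (i':ℕ) = i + 1 ∧
        ψ i b = ((-2 * (ψ i' b).1.2.1, (ψ i' b).1.2.2, 0), 0) := by
    intro i b hi
    have : (i:ℕ) ≠ r + 2 := fun h => hi (Fin.ext h)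
    have := i.2
    exact ⟨⟨i+1, by omega⟩, rfl, hX _ _ _ rfl⟩
  have e1 : ∀ b, ψ p1 b = ((-2 * (ψ p0 b).1.2.1, (ψ p0 b).1.2.2, 0), 0) :=
    fun b => hX p0 p1 b rfl
  have hy : ∀ b, (ψ p0 b).1.2.2 = 0 := by
    intro b
    have := key p0 b p1 b p0 b
    simp [sl2Mat, e1, p0, p1, Fin.ext_iff] at this
    have hr : (0:ℝ) ≤ r := Nat.cast_nonneg r
    exact this.resolve_left (fun h => by linarith)
  have e2 : ∀ (i : Fin (r+2+1)) b, (i:ℕ) < r + 1 → ψ i b = 0 := by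
    intro i b hi
    obtain ⟨i', h1, h2⟩ := hlow i b (fun h => by rw [h] at hi; simp [p0] at hi)
    obtain ⟨i'', h3, h4⟩ := hlow i' b (fun h => by rw [h] at h1; simp [p0] at h1; omega)
    have h5 : (ψ i'' b).1.2.2 = 0 := by
      by_cases h : i'' = p0
      · rw [h]; exact hy b
      · obtain ⟨_, _, h6⟩ := hlow i'' b h
        rw [h6]
    rw [h2, h4]; simp [h5]
  have hh : ∀ b, (ψ p0 b).1.2.1 = 0 := by
    intro b
    have k2 : ∀ c d, _ := fun c d => key p0 b p2 c p2 d
    simp [sl2Mat, e2 p2 _ (by simp [p2]), p0, p2, Fin.ext_iff] at k2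
    by_cases hm : ∃ c, c ≠ b
    · obtain ⟨c, hc⟩ := hm
      have k1 := key p0 b p1 c p1 c
      have k2 := k2 c c
      simp [sl2Mat, p0, p1, Fin.ext_iff, Ne.symm hc] at k1 k2
      simp only [p0]; linarith
    · have hm1 : m = 1 := by
        push Not at hm
        have : Subsingleton (Fin m) := ⟨fun x y => (hm x).trans (hm y).symm⟩
        have h1 := Fin.subsingleton_iff_le_one.1 this
        have := b.2
        omega
      have hr : 1 ≤ r := by
        by_contra h
        exact hex ⟨by omega, hm1⟩
      let p3 : Fin (r+2+1) := ⟨r-1, by omega⟩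
      have k3 := key p0 b p3 b p3 b
      have k2 := k2 b b
      have c1 : ¬ (r + 2 = r - 1) := by omega
      have c2 : ¬ (r - 1 = r + 2) := by omega
      simp [sl2Mat, e2 p3 _ (by simp [p3]), p0, p3, Fin.ext_iff, c1, c2,
        Nat.cast_sub hr] at k2 k3
      simp only [p0]; linarith
  have hB : ∀ b, (ψ p0 b).2 = 0 := by
    intro b
    ext d c
    have k2 := key p0 b p2 c p2 d
    simpa [sl2Mat, e2 p2 _ (by simp [p2]), p0, p2, Fin.ext_iff, hy, hh] using k2
  rcases lt_trichotomy (i:ℕ) (r+1) with h | h | h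
  · exact e2 i b h
  · have : i = p1 := Fin.ext h
    rw [this, e1, hy, hh]; simp
  · have : i = p0 := Fin.ext (by have := i.2; simp [p0]; omega)
    rw [this]
    exact Prod.ext (Prod.ext (htop b) (Prod.ext (hh b) (hy b))) (hB b)

/-! ### The highest weight argument -/

/-- The recursion expressing `[X, τ] = -A` in coordinates, solved in closed form. Here `T i j`
is an entry of `τ`, and `a`, `β`, `g` are the entries of the `H`-, `gl_m`- and `Y`-components
of `A` (`a` and `g` being zero off the diagonal of `gl_m`); the coefficients are the
partial sums of `n - 2k`, of `1` and of `(k+1)(n-k)`. -/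
lemma recursion_solution (n : ℕ) (T : ℕ → ℕ → ℝ) (a β g : ℝ)
    (h0 : ∀ i, T i 0 = 0)
    (hz : ∀ j, j ≤ n → T 0 (j+1) =
      -((if j = 0 then a * n + β else 0) + (if j = 1 then g * n else 0)))
    (hs : ∀ i j, i + 1 ≤ n → j ≤ n → T (i+1) (j+1) = T i j
      - ((if j = i+1 then a * (n - 2*(i+1)) + β else 0)
        + (if j = i+2 then g * ((n - (i+1)) * (i+2)) else 0))) :
    ∀ i j, i ≤ n → j ≤ n + 1 → T i j =
      -((if j = i+1 then a * ((i+1) * (n-i)) + (i+1) * β else 0)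
        + (if j = i+2 then g * ((i+1) * (i+2) * (3*n - 2*i) / 6) else 0)) := by
  intro i
  induction i with
  | zero =>
    intro j _ hj
    cases j with
    | zero => simp [h0]
    | succ j =>
      rw [hz j (by omega)]
      by_cases h1 : j = 0
      · simp [h1]
      by_cases h2 : j = 1
      · simp [h2]; left; ring
      · simp [h1, h2]
  | succ i ih =>
    intro j hi hj
    cases j with
    | zero => simp [h0]
    | succ j =>
      rw [hs i j hi (by omega), ih j (by omega) (by omega)]
      by_cases h1 : j = i + 1
      · simp [h1]; ring
      by_cases h2 : j = i + 2
      · simp [h2]; ring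
      · simp [h1, h2]

/-- If the values of `τ` have no component in `ker X = v^0 ⊗ ℝ^m` and `[X, τ] = -A` with
`A ∈ ⟨H, Y⟩ ⊕ gl_m`, then `A` is a multiple `α H` and `τ = -α Y`. -/
lemma highest_weight {n m : ℕ} (hn : 2 ≤ n) (hm : 1 ≤ m) (A : Qlie m) (hA : A.1.1 = 0)
    (τ : Avec n m →ₗ[ℝ] Avec n m)
    (hτ : ∀ i b c, τ (basisA i b) 0 c = 0)
    (hcoc : ∀ i b, -qAct n m A (basisA i b) =
      sl2Mat n (1,0,0) * τ (basisA i b) - τ (sl2Mat n (1,0,0) * basisA i b)) :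
    A.1.2.2 = 0 ∧ A.2 = 0 ∧
      ∀ i b, τ (basisA i b) = -(sl2Mat n (0, 0, A.1.2.1) * basisA i b) := by
  -- entries of `τ`, extended by zero
  let T : Fin m → Fin m → ℕ → ℕ → ℝ := fun b c i j =>
    if h : i < n + 1 ∧ j < n + 1 then τ (basisA ⟨i, h.1⟩ b) ⟨j, h.2⟩ c else 0
  have hXT : ∀ b c i (hi : i < n + 1) j (hj : j < n + 1),
      (sl2Mat n (1,0,0) * τ (basisA ⟨i, hi⟩ b)) ⟨j, hj⟩ c = T b c i (j+1) := by
    intro b c i hi j hj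
    by_cases h : j = n
    · rw [X_mul_apply_last _ h]; simp [T, h]
    · have h' : j + 1 < n + 1 := by omega
      rw [X_mul_apply_succ (j' := ⟨j+1, h'⟩) _ rfl]
      simp only [T]; rw [dif_pos ⟨hi, h'⟩]
  have sol : ∀ b c, _ := fun b c => recursion_solution n (T b c)
    (if b = c then A.1.2.1 else 0) (A.2 c b) (if b = c then A.1.2.2 else 0)
    (by
      intro i
      by_cases hi : i < n + 1
      · simp only [T]; rw [dif_pos ⟨hi, by omega⟩]; exact hτ ⟨i, hi⟩ b c
      · exact dif_neg fun h => hi h.1)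
    (by
      intro j hj
      have hj' : j < n + 1 := by omega
      have h := congrFun (congrFun (hcoc ⟨0, by omega⟩ b) ⟨j, hj'⟩) c
      rw [X_mul_basisA_zero rfl, map_zero, sub_zero, hXT, Matrix.neg_apply, qAct_basisA] at h
      rw [← h]
      by_cases hbc : b = c <;> by_cases h1 : j = 0 <;> by_cases h2 : j = 1 <;>
        simp [hbc, h1, h2, sl2Mat, hA, Fin.ext_iff, eq_comm])
    (by
      intro i j hi hj
      have hi' : i + 1 < n + 1 := by omega
      have hj' : j < n + 1 := by omega
      have h := congrFun (congrFun (hcoc ⟨i+1, hi'⟩ b) ⟨j, hj'⟩) c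
      rw [X_mul_basisA_succ (i' := ⟨i, by omega⟩) rfl, Matrix.sub_apply, hXT, Matrix.neg_apply,
        qAct_basisA] at h
      have hT : T b c i j = τ (basisA ⟨i, by omega⟩ b) ⟨j, hj'⟩ c := by
        simp only [T]; rw [dif_pos ⟨by omega, hj'⟩]
      rw [hT, sub_eq_iff_eq_add'.1 h.symm, sub_eq_add_neg]
      congr 2
      by_cases h1 : j = i + 1
      · subst h1
        by_cases hbc : b = c <;> simp [hbc, sl2Mat, hA]
      by_cases h2 : j = i + 2
      · subst h2
        by_cases hbc : b = c <;> simp [hbc, sl2Mat, hA]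
        left; left; ring
      · have h3 : ¬ (i + 1 = j) := fun h => h1 h.symm
        have h4 : ¬ (i + 1 + 1 = j) := fun h => h2 h.symm
        by_cases hbc : b = c <;> simp [hbc, sl2Mat, hA, h1, h2, h3, h4])
  have hnpos : (0:ℝ) < n := by exact_mod_cast (by omega : 0 < n)
  -- the entry of `τ` just outside the matrix vanishes, which kills the `gl_m`-part
  have hB : A.2 = 0 := by
    ext c b
    have h := sol b c n (n+1) le_rfl le_rfl
    simp [T] at h
    rcases h with h | h
    · linarith
    · exact h
  have hY : A.1.2.2 = 0 := by
    -- the entry `(n-1, n+1)` also lies outside the matrix, and `b = c` makes its `Y`-term visible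
    let b : Fin m := ⟨0, hm⟩
    have h := sol b b (n-1) (n+1) (by omega) le_rfl
    have e1 : ¬ (n + 1 = n - 1 + 1) := by omega
    have e2 : n + 1 = n - 1 + 2 := by omega
    rw [if_neg e1, if_pos e2, if_pos rfl, Nat.cast_sub (by omega)] at h
    simp only [T] at h
    rw [dif_neg (by omega)] at h
    have h2 : A.1.2.2 * ((n:ℝ) * (n+1) * (n+2) / 6) = 0 := by
      push_cast at h
      linear_combination h
    exact (mul_eq_zero.1 h2).resolve_right (by positivity)
  refine ⟨hY, hB, fun i b => ?_⟩
  ext j c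
  have hi := i.2
  have hj := j.2
  have h := sol b c i j (by omega) (by omega)
  have hT : T b c i j = τ (basisA i b) j c := by
    simp only [T]; rw [dif_pos ⟨hi, hj⟩]
  rw [← hT, h, Matrix.neg_apply, sl2Mat_mul_basisA, hY, hB]
  congr 1
  by_cases hbc : b = c
  · by_cases h1 : (j:ℕ) = i + 1
    · simp [hbc, h1, sl2Mat]; left; ring
    · have h2 : ¬ ((i:ℕ) + 1 = j) := fun h => h1 h.symm
      simp [hbc, h1, h2, sl2Mat]
  · simp [hbc]

/-- the graded Lie algebra `g` is the full Tanaka prolongation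
of its non-positive part, i.e. `H¹(g₋,g)` is concentrated in non-positive
homogeneities (for `n ≥ 2`, `m ≥ 1`, `(n,m) ≠ (2,1)`).  Concretely: if the
pair `(A, φ) ∈ g × C¹(a,g)` represents a cocycle in `C¹(g₋,g)` (that is,
`∂_a φ = 0` and `∂_a A = X·φ`) homogeneous of degree `ℓ ≥ 1`, then it is a
coboundary: `(A, φ) = ∂_{g₋}(−λ Y)` for some `λ ∈ ℝ`. -/
theorem tanaka_prolongation (n m : ℕ) (hn : 2 ≤ n) (hm : 1 ≤ m)
    (hex : ¬(n = 2 ∧ m = 1)) (l : ℤ) (hl : 1 ≤ l)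
    (Ag : Glie n m) (φ : Avec n m →ₗ[ℝ] Glie n m)
    (hcoc1 : ∀ u v : Avec n m, gBracket (embA u) (φ v) = gBracket (embA v) (φ u))
    (hcoc2 : ∀ v : Avec n m,
      gBracket (embA v) Ag = gBracket (Xg n m) (φ v) - φ (sl2Mat n (1,0,0) * v))
    (hA : Ag ∈ Egrade n m (l - 1))
    (hφ : ∀ (i : Fin (n+1)) (u : Avec n m),
      (∀ (i' : Fin (n+1)) (b : Fin m), i' ≠ i → u i' b = 0) →
      φ u ∈ Egrade n m ((i:ℤ) - (n+1) + l)) :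
    ∃ lam : ℝ, Ag = gBracket (Xg n m) (-lam • Yg n m) ∧
      ∀ v : Avec n m, φ v = gBracket (embA v) (-lam • Yg n m) := by
  have hgr : ∀ (i : Fin (n+1)) (b : Fin m), φ (basisA i b) ∈ Egrade n m ((i:ℤ) - (n+1) + l) := fun i b =>
    hφ i _ fun i' b' h => by simp [Ne.symm h]
  have hψ : ∀ i b, (φ (basisA i b)).1 = 0 := by
    refine prolongation_trivial hn hex (fun i b => (φ (basisA i b)).1) ?_ ?_ ?_
    · intro i b k c
      have h := congrArg Prod.snd (hcoc1 (basisA i b) (basisA k c))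
      simp only [gBracket, embA, qAct_zero_left, zero_sub, neg_inj] at h
      exact h.symm
    · intro i i' b h
      -- the `q`-component of `[v, A]` vanishes, so `ψ` commutes with `X`
      have h2 := congrArg Prod.fst (hcoc2 (basisA i b))
      rw [X_mul_basisA_succ h] at h2
      have h3 : (0 : Qlie m) = (gBracket (Xg n m) (φ (basisA i b))).1 - (φ (basisA i' b)).1 := by
        rw [← Prod.fst_sub, ← h2]
        simp [gBracket, embA, sl2Bracket]
        rfl
      rw [← sub_eq_zero.1 h3.symm]
      simp [gBracket, Xg, sl2Bracket]
    · intro b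
      exact Egrade_X (hgr (Fin.last n) b) (by simp; omega)
  have hA2 : Ag.2 = 0 := by
    ext j c
    exact Egrade_a hA j c (by have := j.2; omega)
  have hA1 : Ag.1.1.1 = 0 := Egrade_X hA (by omega)
  obtain ⟨hY, hB, hτ⟩ := highest_weight hn hm Ag.1 hA1 (LinearMap.snd ℝ _ _ ∘ₗ φ)
    (fun i b c => Egrade_a (hgr i b) 0 c (by simp; omega))
    (fun i b => by
      have h := congrArg Prod.snd (hcoc2 (basisA i b))
      simpa [gBracket, embA, Xg, qAct, sl2Mat_zero] using h)
  refine ⟨-Ag.1.1.2.1, ?_, ?_⟩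
  · refine Prod.ext (Prod.ext (Prod.ext ?_ (Prod.ext ?_ ?_)) ?_) ?_
    · simp [gBracket, Xg, Yg, sl2Bracket, hA1]
    · simp [gBracket, Xg, Yg, sl2Bracket]
    · simp [gBracket, Xg, Yg, sl2Bracket, hY]
    · simp [gBracket, Xg, Yg, hB]
    · simp [gBracket, Xg, Yg, qAct_zero_right, hA2]
  · let L : Avec n m →ₗ[ℝ] Glie n m :=
      { toFun := fun v => (0, -(sl2Mat n (0, 0, Ag.1.1.2.1) * v))
        map_add' := fun u v => by simp [Matrix.mul_add, add_comm]
        map_smul' := fun r v => by simp }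
    have hL : φ = L := by
      refine Matrix.ext_linearMap _ fun i b => LinearMap.ext_ring ?_
      exact Prod.ext (hψ i b) (hτ i b)
    intro v
    rw [hL]
    simp [L, gBracket, embA, Yg, qAct, sl2Bracket, sl2Mat_zero]
    rfl
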